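/- Let 0<α≤1, let {q_n : n≥0} be a non-increasing sequence of non-negative reals with q_0>0 satisfying n^α/Q_n = O(1) and (q_n − q_{n+1})/n^{α−2} = O(1) as n→∞, and let a be a 1/(1+α)-atom with support I_N (so ‖a‖_∞ ≤ M_N^{1+α} and ∫_{I_N} a dμ = 0). Then there exists a constant c_α such that for every n > M_N: (i) |t_n a(x)| ≤ c_α M_l^α M_k M_N^α / n^α for x ∈ I_{l+1}(s_k e_k + s_l e_l) with 0 ≤ k < l < N, 1 ≤ s_k ≤ m_k−1, 1 ≤ s_l ≤ m_l−1; and (ii) |t_n a(x)| ≤ c_α M_k M_N^α for x ∈ I_N(s_k e_k) with 0 ≤ k < N, 1 ≤ s_k ≤ m_k−1. -/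

import Mathlib

open MeasureTheory Filter Finset Asymptotics
open scoped ENNReal NNReal

noncomputable section

namespace Vilenkin

/-- The Vilenkin group `G_m`: the complete direct product of the cyclic groups `Z_{m_n}`. -/
abbrev G (m : ℕ → ℕ) := ∀ n, ZMod (m n)

/-- The generalized number system `M_0 = 1`, `M_{n+1} = m_n M_n`. -/
def MM (m : ℕ → ℕ) : ℕ → ℕ
  | 0 => 1
  | n + 1 => m n * MM m n

/-- The generalized Rademacher functions `r_k(x) = exp(2 π i x_k / m_k)`. -/
def rade (m : ℕ → ℕ) (k : ℕ) (x : G m) : ℂ :=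
  Complex.exp (2 * Real.pi * Complex.I * ((x k).val : ℂ) / (m k : ℂ))

/-- The Vilenkin system `ψ_n = ∏_k r_k^{n_k}`, where `n = ∑_k n_k M_k` is the expansion of `n`
in the generalized number system (the digits `n_k = (n / M_k) mod m_k` vanish for `k > n`). -/
def psi (m : ℕ → ℕ) (n : ℕ) (x : G m) : ℂ :=
  ∏ k ∈ Finset.range (n + 1), rade m k x ^ (n / MM m k % m k)

/-- The Dirichlet kernels `D_n = ∑_{k=0}^{n-1} ψ_k`. -/
def D (m : ℕ → ℕ) (n : ℕ) (x : G m) : ℂ := ∑ k ∈ Finset.range n, psi m k x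

/-- The Fejér kernels `K_n = (1/n) ∑_{k=1}^{n} D_k`. -/
def K (m : ℕ → ℕ) (n : ℕ) (x : G m) : ℂ := (n : ℂ)⁻¹ * ∑ k ∈ Finset.Icc 1 n, D m k x

/-- `Q_n = ∑_{k=0}^{n-1} q_k`. -/
def Q (q : ℕ → ℝ) (n : ℕ) : ℝ := ∑ k ∈ Finset.range n, q k

/-- The Nörlund kernels `F_n = (1/Q_n) ∑_{k=1}^{n} q_{n-k} D_k`. -/
def F (m : ℕ → ℕ) (q : ℕ → ℝ) (n : ℕ) (x : G m) : ℂ :=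
  ((Q q n : ℝ) : ℂ)⁻¹ * ∑ k ∈ Finset.Icc 1 n, (q (n - k) : ℂ) * D m k x

/-- The interval (cylinder) `I_n(x) = {y : y_j = x_j for all j < n}`. -/
def cyl (m : ℕ → ℕ) (n : ℕ) (x : G m) : Set (G m) := {y | ∀ j < n, y j = x j}

/-- The element `s_k e_k` of `G_m` (value `s_k` in coordinate `k`, zero elsewhere). -/
def oneSpike (m : ℕ → ℕ) (k sk : ℕ) : G m := fun j => if j = k then (sk : ZMod (m j)) else 0

/-- The element `s_k e_k + s_l e_l` of `G_m` (for `k ≠ l`). -/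
def twoSpike (m : ℕ → ℕ) (k sk l sl : ℕ) : G m :=
  fun j => if j = k then (sk : ZMod (m j)) else if j = l then (sl : ZMod (m j)) else 0

/-- The σ-algebra `𝔉_n` generated by the intervals `I_n(x)`, i.e. by the first `n`
coordinates. -/
def filt (m : ℕ → ℕ) (n : ℕ) : MeasurableSpace (G m) :=
  MeasurableSpace.comap (fun x (i : Fin n) => x i.val) inferInstance

/-- `f = (f^{(n)})` is a martingale with respect to the filtration `(𝔉_n)` and the measure `μ`. -/
def IsMartingale (m : ℕ → ℕ) (μ : Measure (G m)) (f : ℕ → G m → ℂ) : Prop :=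
  (∀ n, Integrable (f n) μ) ∧ (∀ n, Measurable[filt m n] (f n)) ∧
    ∀ n, ∀ s : Set (G m), MeasurableSet[filt m n] s →
      ∫ x in s, f (n + 1) x ∂μ = ∫ x in s, f n x ∂μ

/-- The `L_p`-quasinorm `(∫ g^p dμ)^{1/p}` of a nonnegative (extended-real-valued) function. -/
def lpNormE (m : ℕ → ℕ) (μ : Measure (G m)) (p : ℝ) (g : G m → ℝ≥0∞) : ℝ≥0∞ :=
  (∫⁻ x, g x ^ p ∂μ) ^ (1 / p)

/-- The martingale Hardy space quasinorm `‖f‖_{H_p} = ‖sup_n |f^{(n)}|‖_p`. -/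
def HpNorm (m : ℕ → ℕ) (μ : Measure (G m)) (p : ℝ) (f : ℕ → G m → ℂ) : ℝ≥0∞ :=
  lpNormE m μ p (fun x => ⨆ n, (‖f n x‖₊ : ℝ≥0∞))

/-- The Vilenkin-Fourier coefficients of a martingale:
`f̂(i) = lim_k ∫ f^{(k)} conj ψ_i dμ`. -/
def mcoef (m : ℕ → ℕ) (μ : Measure (G m)) (f : ℕ → G m → ℂ) (i : ℕ) : ℂ :=
  limUnder atTop fun k => ∫ x, f k x * (starRingEnd ℂ) (psi m i x) ∂μ

/-- The partial sums `S_n f = ∑_{k=0}^{n-1} f̂(k) ψ_k` of the Vilenkin-Fourier series of a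
martingale. -/
def mS (m : ℕ → ℕ) (μ : Measure (G m)) (f : ℕ → G m → ℂ) (n : ℕ) (x : G m) : ℂ :=
  ∑ k ∈ Finset.range n, mcoef m μ f k * psi m k x

/-- The Nörlund means `t_n f = (1/Q_n) ∑_{k=1}^{n} q_{n-k} S_k f` of a martingale. -/
def mT (m : ℕ → ℕ) (q : ℕ → ℝ) (μ : Measure (G m)) (f : ℕ → G m → ℂ) (n : ℕ) (x : G m) : ℂ :=
  ((Q q n : ℝ) : ℂ)⁻¹ * ∑ k ∈ Finset.Icc 1 n, (q (n - k) : ℂ) * mS m μ f k x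

/-- The Cesàro numbers `A_0^α = 0`, `A_n^α = (α+1)⋯(α+n)/n!`. -/
def AC (α : ℝ) (n : ℕ) : ℝ :=
  if n = 0 then 0 else (∏ j ∈ Finset.Icc 1 n, (α + (j : ℝ))) / (n.factorial : ℝ)

/-- The `(C,α)` (Cesàro) means `σ_n^α f = (1/A_n^α) ∑_{k=1}^{n} A_{n-k}^{α-1} S_k f` of a
martingale. -/
def mCes (m : ℕ → ℕ) (α : ℝ) (μ : Measure (G m)) (f : ℕ → G m → ℂ) (n : ℕ) (x : G m) : ℂ :=
  ((AC α n : ℝ) : ℂ)⁻¹ * ∑ k ∈ Finset.Icc 1 n, ((AC (α - 1) (n - k) : ℝ) : ℂ) * mS m μ f k x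

/-- The Fejér means `σ_n f = (1/n) ∑_{k=1}^{n} S_k f` of a martingale. -/
def mFej (m : ℕ → ℕ) (μ : Measure (G m)) (f : ℕ → G m → ℂ) (n : ℕ) (x : G m) : ℂ :=
  (n : ℂ)⁻¹ * ∑ k ∈ Finset.Icc 1 n, mS m μ f k x

/-- The Vilenkin-Fourier coefficients of an integrable function. -/
def fcoef (m : ℕ → ℕ) (μ : Measure (G m)) (g : G m → ℂ) (i : ℕ) : ℂ :=
  ∫ x, g x * (starRingEnd ℂ) (psi m i x) ∂μ

/-- The partial sums of the Vilenkin-Fourier series of an integrable function. -/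
def fS (m : ℕ → ℕ) (μ : Measure (G m)) (g : G m → ℂ) (n : ℕ) (x : G m) : ℂ :=
  ∑ k ∈ Finset.range n, fcoef m μ g k * psi m k x

/-- The Nörlund means of an integrable function. -/
def fT (m : ℕ → ℕ) (q : ℕ → ℝ) (μ : Measure (G m)) (g : G m → ℂ) (n : ℕ) (x : G m) : ℂ :=
  ((Q q n : ℝ) : ℂ)⁻¹ * ∑ k ∈ Finset.Icc 1 n, (q (n - k) : ℂ) * fS m μ g k x

/-!
The Nörlund mean is a convolution, `t_n a(x) = ∫ a(t) F_n(x - t) dμ(t)`, and an atom has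
`‖a‖_1 ≤ M_N ^ α`; since subtracting `t ∈ I_N` does not change the coordinates below `N`, it
suffices to bound the kernel `F_n` pointwise. If `k` is the first nonzero coordinate of `x`, then
`D_{M_{k+1}}(x) = 0`, so all `D_j(x)` are at most `M_{k+1}`; if `l` is the next nonzero coordinate,
then all sums `∑_{j<n} D_j(x)` are at most `2 M_{k+1} M_{l+1}`. In `Q_n F_n = ∑ q_{n-j} D_j` we use
the first bound for the `M_l` largest weights and, after summation by parts, the second for the
remaining ones. This gives `|F_n(x)| ≤ C M_k Q_{M_l} / Q_n`, and the regularity of `q` yields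
`Q_M / Q_n ≤ C (M / n) ^ α` for `M ≤ n`.
-/

section WeightedSums

lemma sum_range_mul_add_of_quasiperiodic {R : Type*} [CommSemiring R] {g w : ℕ → R} {L : ℕ}
    (hg : ∀ c, ∀ i < L, g (c * L + i) = w c * g i) (b : ℕ) {r : ℕ} (hr : r ≤ L) :
    ∑ i ∈ range (b * L + r), g i =
      (∑ c ∈ range b, w c) * ∑ i ∈ range L, g i + w b * ∑ i ∈ range r, g i := by
  have block (c : ℕ) {s : ℕ} (hs : s ≤ L) :
      ∑ i ∈ range s, g (c * L + i) = w c * ∑ i ∈ range s, g i := by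
    rw [mul_sum]
    exact sum_congr rfl fun i hi => hg c i ((mem_range.mp hi).trans_le hs)
  rw [sum_range_add, block b hr]
  congr 1
  induction b with
  | zero => simp
  | succ b ih => rw [Nat.succ_mul, sum_range_add, ih, block b le_rfl, sum_range_succ, add_mul]

variable {E : Type*} [NormedAddCommGroup E]

lemma norm_sum_range_sub_le {d : ℕ → E} {S : ℝ} (hS : ∀ n, ‖∑ i ∈ range n, d i‖ ≤ S)
    {n J : ℕ} (hJ : J ≤ n) : ‖∑ i ∈ range J, d (n - i)‖ ≤ 2 * S := by
  rw [range_eq_Ico, sum_Ico_reflect d 0 (by lia), sum_Ico_eq_sub d (by lia), two_mul]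
  exact norm_sub_le_of_le (hS _) (hS _)

variable [NormedSpace ℝ E]

lemma norm_sum_smul_le_of_antitone {p : ℕ → ℝ} (hp : Antitone p) (hp0 : ∀ i, 0 ≤ p i)
    {e : ℕ → E} {C : ℝ} {n : ℕ} (he : ∀ J ≤ n, ‖∑ i ∈ range J, e i‖ ≤ C) :
    ‖∑ i ∈ range n, p i • e i‖ ≤ p 0 * C := by
  have by_parts (J : ℕ) (hJ : J ≤ n) :
      ‖∑ i ∈ range J, p i • e i - p J • ∑ i ∈ range J, e i‖ ≤ (p 0 - p J) * C := by
    induction J with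
    | zero => simp
    | succ J ih =>
      have hstep : 0 ≤ p J - p (J + 1) := sub_nonneg.mpr (hp J.le_succ)
      calc ‖∑ i ∈ range (J + 1), p i • e i - p (J + 1) • ∑ i ∈ range (J + 1), e i‖
          = ‖(∑ i ∈ range J, p i • e i - p J • ∑ i ∈ range J, e i) +
              (p J - p (J + 1)) • ∑ i ∈ range (J + 1), e i‖ := by
            congr 1
            rw [sum_range_succ, sum_range_succ]
            module
        _ ≤ (p 0 - p J) * C + (p J - p (J + 1)) * C := by
            refine norm_add_le_of_le (ih (by lia)) ?_
            rw [norm_smul, Real.norm_of_nonneg hstep]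
            exact mul_le_mul_of_nonneg_left (he _ hJ) hstep
        _ = (p 0 - p (J + 1)) * C := by ring
  have hlast : ‖p n • ∑ i ∈ range n, e i‖ ≤ p n * C := by
    rw [norm_smul, Real.norm_of_nonneg (hp0 n)]
    exact mul_le_mul_of_nonneg_left (he n le_rfl) (hp0 n)
  calc ‖∑ i ∈ range n, p i • e i‖ ≤ (p 0 - p n) * C + p n * C := by
        simpa only [sub_add_cancel] using norm_add_le_of_le (by_parts n le_rfl) hlast
    _ = p 0 * C := by ring

lemma sum_Icc_smul_eq_sum_range (q : ℕ → ℝ) (d : ℕ → E) (n : ℕ) :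
    ∑ k ∈ Icc 1 n, q (n - k) • d k = ∑ j ∈ range n, q j • d (n - j) := by
  refine sum_nbij' (n - ·) (n - ·) ?_ ?_ ?_ ?_ fun k hk => ?_
  any_goals intro k hk; simp only [mem_Icc, mem_range] at hk ⊢; lia
  rw [Nat.sub_sub_self (mem_Icc.mp hk).2]

lemma norm_sum_range_smul_le_Q_mul {q : ℕ → ℝ} (hq : ∀ i, 0 ≤ q i) {e : ℕ → E} {A : ℝ}
    (he : ∀ i, ‖e i‖ ≤ A) (n : ℕ) : ‖∑ j ∈ range n, q j • e j‖ ≤ Q q n * A := by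
  rw [Q, sum_mul]
  refine norm_sum_le_of_le _ fun j _ => ?_
  rw [norm_smul, Real.norm_of_nonneg (hq j)]
  exact mul_le_mul_of_nonneg_left (he j) (hq j)

-- The `M` largest weights meet the size of `d`; for the others, summation by parts trades the size
-- of `d` for that of its partial sums.
lemma norm_sum_Icc_smul_le {q : ℕ → ℝ} (hq : Antitone q) (hq0 : ∀ i, 0 ≤ q i) {d : ℕ → E}
    {A S : ℝ} (hA : ∀ i, ‖d i‖ ≤ A) (hS : ∀ n, ‖∑ i ∈ range n, d i‖ ≤ S) {M n : ℕ}
    (hMn : M ≤ n) :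
    ‖∑ k ∈ Icc 1 n, q (n - k) • d k‖ ≤ Q q M * A + q M * (2 * S) := by
  obtain ⟨r, rfl⟩ := Nat.exists_eq_add_of_le hMn
  rw [sum_Icc_smul_eq_sum_range, sum_range_add]
  simp only [Nat.add_sub_add_left]
  refine norm_add_le_of_le (norm_sum_range_smul_le_Q_mul hq0 (fun _ => hA _) M) ?_
  exact norm_sum_smul_le_of_antitone (p := fun i => q (M + i))
    (fun i j hij => hq (Nat.add_le_add_left hij M)) (fun i => hq0 _)
    fun J hJ => norm_sum_range_sub_le hS hJ

end WeightedSums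

section NorlundWeights

open scoped Topology

variable {q : ℕ → ℝ}

lemma Q_nonneg (hq : ∀ i, 0 ≤ q i) (n : ℕ) : 0 ≤ Q q n := sum_nonneg fun i _ => hq i

lemma Q_mono (hq : ∀ i, 0 ≤ q i) : Monotone (Q q) := fun _ _ h =>
  sum_le_sum_of_subset_of_nonneg (range_mono h) fun i _ _ => hq i

lemma Q_pos (hq0 : 0 < q 0) (hq : ∀ i, 0 ≤ q i) {n : ℕ} (hn : 0 < n) : 0 < Q q n :=
  hq0.trans_le (single_le_sum (fun i _ => hq i) (mem_range.mpr hn))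

lemma natCast_mul_le_Q {c : ℝ} {n : ℕ} (h : ∀ i < n, c ≤ q i) : n * c ≤ Q q n := by
  simpa [Q] using card_nsmul_le_sum (range n) q c fun i hi => h i (mem_range.mp hi)

lemma div_two_mul_le_one_sub_rpow {s x : ℝ} (hs0 : 0 ≤ s) (hs1 : s ≤ 1) (hx : 1 ≤ x) :
    s / (2 * x) ≤ 1 - (x / (x + 1)) ^ s := by
  have bernoulli := rpow_one_add_le_one_add_mul_self (s := -1 / (x + 1))
    (by rw [le_div_iff₀ (by positivity)]; linarith) hs0 hs1
  have hbase : 1 + -1 / (x + 1) = x / (x + 1) := by field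
  have hden : s / (2 * x) ≤ s / (x + 1) := by gcongr; linarith
  have hneg : s * (-1 / (x + 1)) = -(s / (x + 1)) := by ring
  rw [hbase, hneg] at bernoulli
  linarith

lemma rpow_neg_sub_one_le_sub {s x : ℝ} (hs0 : 0 ≤ s) (hs1 : s ≤ 1) (hx : 1 ≤ x) :
    s / 2 * x ^ (-s - 1) ≤ x ^ (-s) - (x + 1) ^ (-s) := by
  have hx0 : 0 < x := by linarith
  calc s / 2 * x ^ (-s - 1) = x ^ (-s) * (s / (2 * x)) := by
        rw [Real.rpow_sub_one hx0.ne']; field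
    _ ≤ x ^ (-s) * (1 - (x / (x + 1)) ^ s) := by
        gcongr; exact div_two_mul_le_one_sub_rpow hs0 hs1 hx
    _ = x ^ (-s) - (x + 1) ^ (-s) := by
        rw [Real.div_rpow hx0.le (by positivity), Real.rpow_neg hx0.le,
          Real.rpow_neg (by positivity)]
        field

lemma rpow_sub_one_le_sub {s x : ℝ} (hs0 : 0 ≤ s) (hs1 : s ≤ 1) (hx : 1 ≤ x) :
    s / 2 * x ^ (s - 1) ≤ (x + 1) ^ s - x ^ s := by
  have hx0 : 0 < x := by linarith
  have hgap := div_two_mul_le_one_sub_rpow hs0 hs1 hx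
  calc s / 2 * x ^ (s - 1) = x ^ s * (s / (2 * x)) := by
        rw [Real.rpow_sub_one hx0.ne']; field
    _ ≤ (x + 1) ^ s * (1 - (x / (x + 1)) ^ s) := by
        gcongr; linarith
    _ = (x + 1) ^ s - x ^ s := by
        rw [Real.div_rpow hx0.le (by positivity)]; field

lemma sum_range_succ_rpow_sub_one_le {α : ℝ} (hα0 : 0 < α) (hα1 : α ≤ 1) (M : ℕ) :
    ∑ i ∈ range M, ((i + 1 : ℕ) : ℝ) ^ (α - 1) ≤ 2 / α * ((M + 1 : ℕ) : ℝ) ^ α := by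
  have hstep (i : ℕ) : ((i + 1 : ℕ) : ℝ) ^ (α - 1) ≤
      2 / α * (((i + 1 + 1 : ℕ) : ℝ) ^ α - ((i + 1 : ℕ) : ℝ) ^ α) := by
    have h := rpow_sub_one_le_sub hα0.le hα1 (x := ((i + 1 : ℕ) : ℝ)) (by simp)
    rw [Nat.cast_succ (i + 1), div_mul_eq_mul_div, le_div_iff₀ hα0]
    linarith
  calc ∑ i ∈ range M, ((i + 1 : ℕ) : ℝ) ^ (α - 1)
      ≤ ∑ i ∈ range M, 2 / α * (((i + 1 + 1 : ℕ) : ℝ) ^ α - ((i + 1 : ℕ) : ℝ) ^ α) :=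
        sum_le_sum fun i _ => hstep i
    _ = 2 / α * (((M + 1 : ℕ) : ℝ) ^ α - 1) := by
        rw [← mul_sum, sum_range_sub fun i => ((i + 1 : ℕ) : ℝ) ^ α]; simp
    _ ≤ 2 / α * ((M + 1 : ℕ) : ℝ) ^ α := by gcongr; linarith

lemma le_add_mul_rpow_neg_of_sub_le {L C β : ℝ} (hβ0 : 0 < β) (hβ1 : β ≤ 1) (hC : 0 ≤ C)
    (hL : Tendsto q atTop (𝓝 L))
    (hdiff : ∀ n : ℕ, 0 < n → q n - q (n + 1) ≤ C * (n : ℝ) ^ (-β - 1)) {n : ℕ} (hn : 0 < n) :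
    q n ≤ L + 2 * C / β * (n : ℝ) ^ (-β) := by
  have hmono : Monotone fun n : ℕ => q (n + 1) - 2 * C / β * ((n + 1 : ℕ) : ℝ) ^ (-β) := by
    refine monotone_nat_of_le_succ fun n => ?_
    have hpow := mul_le_mul_of_nonneg_left
      (rpow_neg_sub_one_le_sub hβ0.le hβ1 (x := ((n + 1 : ℕ) : ℝ)) (by simp))
      (show 0 ≤ 2 * C / β by positivity)
    have hcancel : 2 * C / β * (β / 2 * ((n + 1 : ℕ) : ℝ) ^ (-β - 1)) =
        C * ((n + 1 : ℕ) : ℝ) ^ (-β - 1) := by field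
    have := hdiff (n + 1) n.succ_pos
    rw [hcancel, ← Nat.cast_succ] at hpow
    linarith
  have hlim : Tendsto (fun n : ℕ => q n - 2 * C / β * (n : ℝ) ^ (-β)) atTop (𝓝 L) := by
    simpa using hL.sub
      (((tendsto_rpow_neg_atTop hβ0).comp tendsto_natCast_atTop_atTop).const_mul (2 * C / β))
  obtain ⟨n, rfl⟩ := Nat.exists_eq_succ_of_ne_zero hn.ne'
  have := hmono.ge_of_tendsto (hlim.comp (tendsto_add_atTop_nat 1)) n
  linarith

lemma exists_le_add_mul_rpow_sub_one {α L C : ℝ} (hα0 : 0 < α) (hα1 : α ≤ 1) (hq : Antitone q)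
    (hL : Tendsto q atTop (𝓝 L))
    (hdiff : ∀ n : ℕ, 0 < n → q n - q (n + 1) ≤ C * (n : ℝ) ^ (α - 2)) :
    ∃ C', 0 ≤ C' ∧ ∀ n : ℕ, 0 < n → q n ≤ L + C' * (n : ℝ) ^ (α - 1) := by
  have hC : 0 ≤ C := by
    have := hdiff 1 one_pos
    have := hq (Nat.le_succ 1)
    simp only [Nat.cast_one, Real.one_rpow, mul_one] at *
    linarith
  rcases hα1.eq_or_lt with rfl | hlt
  · have hLq : L ≤ q 0 := hq.le_of_tendsto hL 0
    refine ⟨q 0 - L, sub_nonneg.mpr hLq, fun n _ => ?_⟩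
    simpa using hq n.zero_le
  · refine ⟨2 * C / (1 - α), div_nonneg (by positivity) (by linarith), fun n hn => ?_⟩
    have := le_add_mul_rpow_neg_of_sub_le (β := 1 - α) (by linarith) (by linarith) hC hL
      (fun n hn => (hdiff n hn).trans_eq (by ring_nf)) hn
    rwa [neg_sub] at this

lemma exists_Q_le_mul_add_mul_rpow {α L C : ℝ} (hα0 : 0 < α) (hα1 : α ≤ 1) (hq : Antitone q)
    (hL : Tendsto q atTop (𝓝 L))
    (hdiff : ∀ n : ℕ, 0 < n → q n - q (n + 1) ≤ C * (n : ℝ) ^ (α - 2)) :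
    ∃ E, 0 ≤ E ∧ ∀ M : ℕ, 0 < M → Q q M ≤ L * M + E * (M : ℝ) ^ α := by
  obtain ⟨C', hC', hle⟩ := exists_le_add_mul_rpow_sub_one hα0 hα1 hq hL hdiff
  have hLq : 0 ≤ q 0 - L := sub_nonneg.mpr (hq.le_of_tendsto hL 0)
  refine ⟨(q 0 - L) + C' * (2 / α), by positivity, fun M hM => ?_⟩
  obtain ⟨M, rfl⟩ := Nat.exists_eq_succ_of_ne_zero hM.ne'
  have hone : 1 ≤ ((M + 1 : ℕ) : ℝ) ^ α := Real.one_le_rpow (by simp) hα0.le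
  calc Q q (M + 1) = ∑ i ∈ range M, q (i + 1) + q 0 := sum_range_succ' q M
    _ ≤ ∑ i ∈ range M, (L + C' * ((i + 1 : ℕ) : ℝ) ^ (α - 1)) + q 0 := by
        gcongr with i
        exact hle (i + 1) i.succ_pos
    _ = M * L + C' * ∑ i ∈ range M, ((i + 1 : ℕ) : ℝ) ^ (α - 1) + q 0 := by
        rw [sum_add_distrib, ← mul_sum, sum_const, card_range, nsmul_eq_mul]
    _ ≤ M * L + C' * (2 / α * ((M + 1 : ℕ) : ℝ) ^ α) + (L + (q 0 - L) * 1) := by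
        gcongr
        · exact sum_range_succ_rpow_sub_one_le hα0 hα1 M
        · linarith
    _ ≤ M * L + C' * (2 / α * ((M + 1 : ℕ) : ℝ) ^ α) +
          (L + (q 0 - L) * ((M + 1 : ℕ) : ℝ) ^ α) := by gcongr
    _ = L * (M + 1 : ℕ) + ((q 0 - L) + C' * (2 / α)) * ((M + 1 : ℕ) : ℝ) ^ α := by
        push_cast; ring

-- If `q` decreases to `L`, then `Q_M ≤ L M + E M ^ α`, whereas `Q_n` dominates both `L n` and
-- a multiple of `n ^ α`; moreover `M / n ≤ (M / n) ^ α`.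
lemma exists_Q_div_Q_le_of_pos {α : ℝ} (hα0 : 0 < α) (hα1 : α ≤ 1) (hq0 : 0 < q 0)
    (hq : ∀ i, 0 ≤ q i) (hanti : Antitone q)
    (hQ : (fun n : ℕ => (n : ℝ) ^ α / Q q n) =O[atTop] (fun _ => (1 : ℝ)))
    (hdiff : (fun n : ℕ => (q n - q (n + 1)) / (n : ℝ) ^ (α - 2)) =O[atTop]
      (fun _ => (1 : ℝ))) :
    ∃ E, 0 ≤ E ∧ ∀ M n : ℕ, 0 < M → M ≤ n →
      Q q M / Q q n ≤ E * ((M : ℝ) ^ α / (n : ℝ) ^ α) := by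
  obtain ⟨C₁, hC₁⟩ := isBigO_one_nat_atTop_iff.mp hQ
  obtain ⟨C₂, hC₂⟩ := isBigO_one_nat_atTop_iff.mp hdiff
  obtain ⟨L, hL⟩ : ∃ L, Tendsto q atTop (𝓝 L) :=
    ⟨_, tendsto_atTop_ciInf hanti ⟨0, Set.forall_mem_range.mpr hq⟩⟩
  have hL0 : 0 ≤ L := ge_of_tendsto' hL hq
  have hstep (n : ℕ) (hn : 0 < n) : q n - q (n + 1) ≤ C₂ * (n : ℝ) ^ (α - 2) :=
    (div_le_iff₀ (by positivity)).mp ((le_abs_self _).trans (hC₂ n))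
  obtain ⟨E, hE, hQM⟩ := exists_Q_le_mul_add_mul_rpow hα0 hα1 hanti hL hstep
  have hC₁0 : 0 ≤ C₁ := (norm_nonneg _).trans (hC₁ 0)
  refine ⟨1 + E * C₁, by positivity, fun M n hM hMn => ?_⟩
  have hn : (0 : ℝ) < n := by exact_mod_cast hM.trans_le hMn
  have hQn : 0 < Q q n := Q_pos hq0 hq (hM.trans_le hMn)
  have hlinear : L * n / Q q n ≤ 1 := by
    rw [div_le_one hQn, mul_comm]
    exact natCast_mul_le_Q fun i _ => hanti.le_of_tendsto hL i
  have hpower : (n : ℝ) ^ α / Q q n ≤ C₁ := (le_abs_self _).trans (hC₁ n)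
  have hratio : (M : ℝ) / n ≤ (M : ℝ) ^ α / (n : ℝ) ^ α := by
    rw [← Real.div_rpow M.cast_nonneg hn.le]
    exact Real.self_le_rpow_of_le_one (by positivity)
      ((div_le_one hn).mpr (by exact_mod_cast hMn)) hα1
  calc Q q M / Q q n ≤ (L * M + E * (M : ℝ) ^ α) / Q q n := by gcongr; exact hQM M hM
    _ = M / n * (L * n / Q q n) + E * ((n : ℝ) ^ α / Q q n) * ((M : ℝ) ^ α / (n : ℝ) ^ α) := by
        field
    _ ≤ (M : ℝ) ^ α / (n : ℝ) ^ α * 1 + E * C₁ * ((M : ℝ) ^ α / (n : ℝ) ^ α) := by gcongr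
    _ = (1 + E * C₁) * ((M : ℝ) ^ α / (n : ℝ) ^ α) := by ring

lemma exists_Q_div_Q_le {α : ℝ} (hα1 : α ≤ 1) (hq0 : 0 < q 0) (hq : ∀ i, 0 ≤ q i)
    (hanti : Antitone q)
    (hQ : (fun n : ℕ => (n : ℝ) ^ α / Q q n) =O[atTop] (fun _ => (1 : ℝ)))
    (hdiff : (fun n : ℕ => (q n - q (n + 1)) / (n : ℝ) ^ (α - 2)) =O[atTop]
      (fun _ => (1 : ℝ))) :
    ∃ E, 0 ≤ E ∧ ∀ M n : ℕ, 0 < M → M ≤ n →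
      Q q M / Q q n ≤ E * ((M : ℝ) ^ α / (n : ℝ) ^ α) := by
  rcases lt_or_ge 0 α with hα0 | hα0
  · exact exists_Q_div_Q_le_of_pos hα0 hα1 hq0 hq hanti hQ hdiff
  refine ⟨1, zero_le_one, fun M n hM hMn => ?_⟩
  have hM' : (0 : ℝ) < M := by exact_mod_cast hM
  have hpow : (n : ℝ) ^ α ≤ (M : ℝ) ^ α :=
    Real.rpow_le_rpow_of_nonpos hM' (by exact_mod_cast hMn) hα0
  have hn : (0 : ℝ) < n := by exact_mod_cast hM.trans_le hMn
  calc Q q M / Q q n ≤ 1 := (div_le_one (Q_pos hq0 hq (hM.trans_le hMn))).mpr (Q_mono hq hMn)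
    _ ≤ 1 * ((M : ℝ) ^ α / (n : ℝ) ^ α) := by rwa [one_mul, one_le_div (by positivity)]

end NorlundWeights

section NumberSystem

variable {m : ℕ → ℕ}

lemma MM_succ (k : ℕ) : MM m (k + 1) = m k * MM m k := rfl

lemma MM_dvd_MM {i j : ℕ} (h : i ≤ j) : MM m i ∣ MM m j := by
  induction j, h using Nat.le_induction with
  | base => rfl
  | succ j _ ih => exact ih.mul_left _

variable (m) in
/-- The `k`-th digit `n_k` of `n = ∑ n_k M_k` in the generalized number system, that is, the
exponent of `r_k` in `ψ_n`. -/
def digit (n k : ℕ) : ℕ := n / MM m k % m k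

lemma digit_eq_zero_of_lt {n k : ℕ} (h : n < MM m k) : digit m n k = 0 := by
  rw [digit, Nat.div_eq_of_lt h, Nat.zero_mod]

lemma digit_eq_of_modEq {n n' k : ℕ} (h : n ≡ n' [MOD MM m (k + 1)]) :
    digit m n k = digit m n' k := by
  rw [digit, digit, ← Nat.mod_mul_right_div_self, ← Nat.mod_mul_right_div_self,
    mul_comm, ← MM_succ, h]

lemma mul_MM_modEq_zero (b : ℕ) {j K : ℕ} (h : j < K) : b * MM m K ≡ 0 [MOD MM m (j + 1)] :=
  Nat.modEq_zero_iff_dvd.mpr ((MM_dvd_MM h).mul_left b)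

lemma digit_mul_MM_of_lt (b : ℕ) {j K : ℕ} (h : j < K) : digit m (b * MM m K) j = 0 := by
  rw [digit_eq_of_modEq (mul_MM_modEq_zero b h), digit, Nat.zero_div, Nat.zero_mod]

lemma MM_pos [∀ n, NeZero (m n)] (k : ℕ) : 0 < MM m k := by
  induction k with
  | zero => exact one_pos
  | succ k ih => exact Nat.mul_pos (NeZero.pos (m k)) ih

lemma MM_mono [∀ n, NeZero (m n)] : Monotone (MM m) := fun _ j h =>
  Nat.le_of_dvd (MM_pos j) (MM_dvd_MM h)

lemma digit_mul_MM_self [∀ n, NeZero (m n)] {u k : ℕ} (hu : u < m k) :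
    digit m (u * MM m k) k = u := by
  rw [digit, Nat.mul_div_cancel _ (MM_pos k), Nat.mod_eq_of_lt hu]

lemma digit_mul_MM_add [∀ n, NeZero (m n)] (b : ℕ) {K r : ℕ} (hr : r < MM m K) (j : ℕ) :
    digit m (b * MM m K + r) j = digit m (b * MM m K) j + digit m r j := by
  rcases lt_or_ge j K with h | h
  · rw [digit_mul_MM_of_lt b h, zero_add]
    exact digit_eq_of_modEq (by simpa using (mul_MM_modEq_zero b h).add_right r)
  · obtain ⟨c, hc⟩ := MM_dvd_MM (m := m) h
    rw [digit_eq_zero_of_lt (hr.trans_le (MM_mono h)), add_zero, digit, digit, hc,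
      ← Nat.div_div_eq_div_mul, ← Nat.div_div_eq_div_mul, Nat.mul_div_cancel _ (MM_pos K),
      add_comm, Nat.add_mul_div_right _ _ (MM_pos K), Nat.div_eq_of_lt hr, zero_add]

lemma lt_MM [∀ n, (m n).AtLeastTwo] (k : ℕ) : k < MM m k := by
  induction k with
  | zero => exact one_pos
  | succ k ih =>
    have := Nat.mul_le_mul_right (MM m k) (Nat.AtLeastTwo.prop (n := m k))
    rw [MM_succ]
    lia

end NumberSystem

section VilenkinSystem

variable {m : ℕ → ℕ}

lemma rade_eq_one_of_apply_eq_zero {k : ℕ} {x : G m} (h : x k = 0) : rade m k x = 1 := by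
  simp [rade, h]

lemma psi_eq_one_of_mem_cyl_zero [∀ n, NeZero (m n)] {r K : ℕ} (hr : r < MM m K) {x : G m}
    (hx : x ∈ cyl m K 0) : psi m r x = 1 := by
  refine prod_eq_one fun j _ => ?_
  change rade m j x ^ digit m r j = 1
  rcases lt_or_ge j K with h | h
  · rw [rade_eq_one_of_apply_eq_zero (hx j h), one_pow]
  · rw [digit_eq_zero_of_lt (hr.trans_le (MM_mono h)), pow_zero]

/-- The point obtained from `x` by replacing the coordinates with index less than `K` by zero. It
separates the frequencies divisible by `M_K`, on which the discarded coordinates have no effect. -/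
def tail (K : ℕ) (x : G m) : G m := fun j => if j < K then 0 else x j

lemma tail_mem_cyl_zero (K : ℕ) (x : G m) : tail K x ∈ cyl m K 0 := fun _ hj => if_pos hj

lemma psi_mul_MM_tail (b K : ℕ) (x : G m) :
    psi m (b * MM m K) (tail K x) = psi m (b * MM m K) x := by
  refine prod_congr rfl fun j _ => ?_
  change rade m j (tail K x) ^ digit m _ j = rade m j x ^ digit m _ j
  by_cases h : j < K
  · rw [digit_mul_MM_of_lt b h, pow_zero, pow_zero]
  · simp [rade, tail, h]

/-- `k` is the least index of a nonzero coordinate of `x`, i.e. `x ∈ I_k \ I_{k+1}`. -/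
def IsLeadingIndex (k : ℕ) (x : G m) : Prop := x ∈ cyl m k 0 ∧ x k ≠ 0

variable [∀ n, NeZero (m n)]

lemma rade_eq_stdAddChar (k : ℕ) (x : G m) : rade m k x = ZMod.stdAddChar (x k) := by
  rw [ZMod.stdAddChar_apply, ZMod.toCircle_apply, rade]

lemma norm_rade (k : ℕ) (x : G m) : ‖rade m k x‖ = 1 := by
  rw [rade_eq_stdAddChar, AddChar.norm_apply]

lemma rade_sub (k : ℕ) (x t : G m) :
    rade m k (x - t) = rade m k x * (starRingEnd ℂ) (rade m k t) := by
  rw [rade_eq_stdAddChar, rade_eq_stdAddChar, rade_eq_stdAddChar, Pi.sub_apply, sub_eq_add_neg,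
    AddChar.map_add_eq_mul, AddChar.map_neg_eq_conj]

lemma sum_range_rade_pow_eq_zero {k : ℕ} {x : G m} (h : x k ≠ 0) :
    ∑ u ∈ range (m k), rade m k x ^ u = 0 := by
  have hne : rade m k x ≠ 1 := by
    rwa [rade_eq_stdAddChar, ← AddChar.map_zero_eq_one (ZMod.stdAddChar (N := m k)),
      ZMod.injective_stdAddChar.ne_iff]
  have hpow : rade m k x ^ m k = 1 := by
    simp [rade_eq_stdAddChar, ← AddChar.map_nsmul_eq_pow]
  rw [geom_sum_eq hne, hpow, sub_self, zero_div]

lemma norm_psi (n : ℕ) (x : G m) : ‖psi m n x‖ = 1 := by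
  simp [psi, norm_prod, norm_rade]

lemma psi_sub (n : ℕ) (x t : G m) :
    psi m n (x - t) = psi m n x * (starRingEnd ℂ) (psi m n t) := by
  simp only [psi, rade_sub, mul_pow, prod_mul_distrib, map_prod, map_pow]

lemma norm_D_le_natCast (n : ℕ) (x : G m) : ‖D m n x‖ ≤ n :=
  (norm_sum_le _ _).trans (by simp [norm_psi])

lemma D_MM_of_mem_cyl_zero {K : ℕ} {x : G m} (hx : x ∈ cyl m K 0) :
    D m (MM m K) x = MM m K := by
  rw [D, sum_congr rfl fun i hi => psi_eq_one_of_mem_cyl_zero (mem_range.mp hi) hx]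
  simp

end VilenkinSystem

section DirichletKernel

variable {m : ℕ → ℕ} [∀ n, (m n).AtLeastTwo]

lemma psi_eq_prod_range {n R : ℕ} (h : n < R) (x : G m) :
    psi m n x = ∏ k ∈ range R, rade m k x ^ digit m n k := by
  refine prod_subset (range_mono h) fun i _ hi => ?_
  have hni : n < MM m i := lt_of_lt_of_le (by simpa using hi) (lt_MM i).le
  change rade m i x ^ digit m n i = 1
  rw [digit_eq_zero_of_lt hni, pow_zero]

lemma psi_mul_MM_add (b : ℕ) {K r : ℕ} (hr : r < MM m K) (x : G m) :
    psi m (b * MM m K + r) x = psi m (b * MM m K) x * psi m r x := by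
  set R := b * MM m K + r + 1
  rw [psi_eq_prod_range (R := R) (by lia), psi_eq_prod_range (R := R) (by lia),
    psi_eq_prod_range (R := R) (by lia), ← prod_mul_distrib]
  exact prod_congr rfl fun j _ => by rw [digit_mul_MM_add b hr, pow_add]

lemma psi_mul_MM_of_mem_cyl_zero {u k : ℕ} (hu : u < m k) {x : G m} (hx : x ∈ cyl m k 0) :
    psi m (u * MM m k) x = rade m k x ^ u := by
  rw [psi_eq_prod_range (R := u * MM m k + k + 1) (by lia), prod_eq_single k]
  · rw [digit_mul_MM_self hu]
  · intro j _ hj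
    rcases lt_or_gt_of_ne hj with h | h
    · rw [rade_eq_one_of_apply_eq_zero (hx j h), one_pow]
    · have hlt : u * MM m k < MM m (k + 1) := Nat.mul_lt_mul_of_pos_right hu (MM_pos k)
      rw [digit_eq_zero_of_lt (hlt.trans_le (MM_mono h)), pow_zero]
  · simp

lemma D_mul_MM_add (b : ℕ) {K r : ℕ} (hr : r ≤ MM m K) (x : G m) :
    D m (b * MM m K + r) x =
      (∑ c ∈ range b, psi m (c * MM m K) x) * D m (MM m K) x + psi m (b * MM m K) x * D m r x :=
  sum_range_mul_add_of_quasiperiodic (g := fun i => psi m i x)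
    (fun c _ hi => psi_mul_MM_add c hi x) b hr

lemma D_MM_succ_eq_zero {k : ℕ} {x : G m} (hx : IsLeadingIndex k x) :
    D m (MM m (k + 1)) x = 0 := by
  have hsum : ∑ c ∈ range (m k), psi m (c * MM m k) x = 0 := by
    rw [← sum_range_rade_pow_eq_zero hx.2]
    exact sum_congr rfl fun c hc => psi_mul_MM_of_mem_cyl_zero (mem_range.mp hc) hx.1
  have hblocks := D_mul_MM_add (m k) (MM m k).zero_le x
  rwa [hsum, zero_mul, zero_add, D, D, range_zero, sum_empty, mul_zero] at hblocks

lemma D_mul_MM_succ_add {k : ℕ} {x : G m} (hx : IsLeadingIndex k x) (b : ℕ) {r : ℕ}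
    (hr : r ≤ MM m (k + 1)) :
    D m (b * MM m (k + 1) + r) x = psi m (b * MM m (k + 1)) x * D m r x := by
  rw [D_mul_MM_add b hr, D_MM_succ_eq_zero hx, mul_zero, zero_add]

lemma norm_D_le {k : ℕ} {x : G m} (hx : IsLeadingIndex k x) (n : ℕ) :
    ‖D m n x‖ ≤ MM m (k + 1) := by
  have hr : n % MM m (k + 1) ≤ MM m (k + 1) := (Nat.mod_lt n (MM_pos (k + 1))).le
  rw [← Nat.div_add_mod' n (MM m (k + 1)), D_mul_MM_succ_add hx _ hr, norm_mul, norm_psi, one_mul]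
  exact (norm_D_le_natCast _ x).trans (by exact_mod_cast hr)

lemma sum_range_D_mul_MM_succ_add {k : ℕ} {x : G m} (hx : IsLeadingIndex k x) (b : ℕ) {r : ℕ}
    (hr : r ≤ MM m (k + 1)) :
    ∑ j ∈ range (b * MM m (k + 1) + r), D m j x =
      (∑ c ∈ range b, psi m (c * MM m (k + 1)) x) * ∑ j ∈ range (MM m (k + 1)), D m j x +
        psi m (b * MM m (k + 1)) x * ∑ j ∈ range r, D m j x :=
  sum_range_mul_add_of_quasiperiodic (g := fun j => D m j x)
    (fun c _ hi => D_mul_MM_succ_add hx c hi.le) b hr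

lemma D_mul_MM_tail (b K : ℕ) (x : G m) :
    D m (b * MM m K) (tail K x) = (∑ c ∈ range b, psi m (c * MM m K) x) * MM m K := by
  have hblocks := D_mul_MM_add b (MM m K).zero_le (tail K x)
  simp only [psi_mul_MM_tail, D_MM_of_mem_cyl_zero (tail_mem_cyl_zero K x)] at hblocks
  simpa [D] using hblocks

-- Up to a boundary block, the sum factors into the frequencies below `M_{k+1}` and the multiples
-- of `M_{k+1}`; the latter see only `tail (k + 1) x`, whose Dirichlet kernels are bounded by
-- `M_{l+1}`.
lemma norm_sum_range_D_le {k l : ℕ} {x : G m} (hk : IsLeadingIndex k x)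
    (hl : IsLeadingIndex l (tail (k + 1) x)) (n : ℕ) :
    ‖∑ j ∈ range n, D m j x‖ ≤ 2 * (MM m (k + 1) * MM m (l + 1)) := by
  set L := MM m (k + 1) with hL
  set b := n / L
  set r := n % L
  have hr : r ≤ L := (Nat.mod_lt n (MM_pos (k + 1))).le
  have hkl : k + 1 ≤ l := by
    by_contra! h
    exact hl.2 (tail_mem_cyl_zero _ x l h)
  have hLl : (L : ℝ) ≤ MM m (l + 1) := by exact_mod_cast MM_mono (hkl.trans l.le_succ)
  have hshort {s : ℕ} (hs : s ≤ L) : ‖∑ j ∈ range s, D m j x‖ ≤ L * L := by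
    refine (norm_sum_le_of_le _ fun j _ => norm_D_le hk j).trans ?_
    rw [sum_const, card_range, nsmul_eq_mul]
    gcongr
  have hmultiples : ‖∑ c ∈ range b, psi m (c * L) x‖ * L ≤ MM m (l + 1) := by
    have h := norm_D_le hl (b * L)
    rwa [hL, D_mul_MM_tail, norm_mul, Complex.norm_natCast] at h
  rw [← Nat.div_add_mod' n L, sum_range_D_mul_MM_succ_add hk b hr]
  calc ‖(∑ c ∈ range b, psi m (c * L) x) * ∑ j ∈ range L, D m j x +
        psi m (b * L) x * ∑ j ∈ range r, D m j x‖
      ≤ ‖∑ c ∈ range b, psi m (c * L) x‖ * (L * L) + 1 * (L * L) := by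
        refine norm_add_le_of_le ?_ ?_ <;> rw [norm_mul]
        · gcongr
          exact hshort le_rfl
        · rw [norm_psi]
          gcongr
          exact hshort hr
    _ = (‖∑ c ∈ range b, psi m (c * L) x‖ * L) * L + L * L := by ring
    _ ≤ MM m (l + 1) * L + L * MM m (l + 1) := by gcongr
    _ = 2 * (L * MM m (l + 1)) := by ring

end DirichletKernel


section NorlundKernel

variable {m : ℕ → ℕ} {q : ℕ → ℝ}

lemma norm_F_eq_div (hq : ∀ i, 0 ≤ q i) (n : ℕ) (x : G m) :
    ‖F m q n x‖ = ‖∑ k ∈ Icc 1 n, q (n - k) • D m k x‖ / Q q n := by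
  simp only [F, Complex.real_smul]
  rw [norm_mul, norm_inv, Complex.norm_real, Real.norm_of_nonneg (Q_nonneg hq n), inv_mul_eq_div]

variable [∀ n, (m n).AtLeastTwo]

lemma norm_F_le (hq : ∀ i, 0 ≤ q i) {k : ℕ} {x : G m} (hk : IsLeadingIndex k x) (n : ℕ) :
    ‖F m q n x‖ ≤ MM m (k + 1) := by
  rw [norm_F_eq_div hq, sum_Icc_smul_eq_sum_range]
  refine div_le_of_le_mul₀ (Q_nonneg hq n) (Nat.cast_nonneg _) ?_
  rw [mul_comm]
  exact norm_sum_range_smul_le_Q_mul hq (fun _ => norm_D_le hk _) n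

lemma norm_F_le_mul_Q_div_Q (hq : ∀ i, 0 ≤ q i) (hanti : Antitone q) {k l : ℕ} {x : G m}
    (hk : IsLeadingIndex k x) (hl : IsLeadingIndex l (tail (k + 1) x)) {n : ℕ}
    (hn : MM m l ≤ n) :
    ‖F m q n x‖ ≤ (1 + 4 * m l) * MM m (k + 1) * (Q q (MM m l) / Q q n) := by
  have hlast : MM m l * q (MM m l) ≤ Q q (MM m l) := natCast_mul_le_Q fun i hi => hanti hi.le
  rw [norm_F_eq_div hq, ← mul_div_assoc]
  refine div_le_div_of_nonneg_right ?_ (Q_nonneg hq n)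
  calc ‖∑ j ∈ Icc 1 n, q (n - j) • D m j x‖
      ≤ Q q (MM m l) * MM m (k + 1) +
          q (MM m l) * (2 * (2 * (MM m (k + 1) * MM m (l + 1)))) :=
        norm_sum_Icc_smul_le hanti hq (norm_D_le hk) (norm_sum_range_D_le hk hl) hn
    _ = Q q (MM m l) * MM m (k + 1) + 4 * m l * MM m (k + 1) * (MM m l * q (MM m l)) := by
        rw [MM_succ l]; push_cast; ring
    _ ≤ Q q (MM m l) * MM m (k + 1) + 4 * m l * MM m (k + 1) * Q q (MM m l) := by gcongr
    _ = (1 + 4 * m l) * MM m (k + 1) * Q q (MM m l) := by ring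

lemma exists_norm_F_le (hm : ∃ B, ∀ n, m n ≤ B) {α : ℝ} (hα : α ≤ 1) (hq0 : 0 < q 0)
    (hq : ∀ i, 0 ≤ q i) (hanti : Antitone q)
    (hQ : (fun n : ℕ => (n : ℝ) ^ α / Q q n) =O[atTop] (fun _ => (1 : ℝ)))
    (hdiff : (fun n : ℕ => (q n - q (n + 1)) / (n : ℝ) ^ (α - 2)) =O[atTop]
      (fun _ => (1 : ℝ))) :
    ∃ c, 0 ≤ c ∧ ∀ (n k : ℕ) (x : G m), IsLeadingIndex k x →
      ‖F m q n x‖ ≤ c * MM m k ∧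
      ∀ l, IsLeadingIndex l (tail (k + 1) x) → MM m l ≤ n →
        ‖F m q n x‖ ≤ c * (MM m l : ℝ) ^ α * MM m k / (n : ℝ) ^ α := by
  obtain ⟨B, hB⟩ := hm
  obtain ⟨E, hE, hratio⟩ := exists_Q_div_Q_le hα hq0 hq hanti hQ hdiff
  have hsucc (k : ℕ) : (MM m (k + 1) : ℝ) ≤ B * MM m k := by
    exact_mod_cast Nat.mul_le_mul_right (MM m k) (hB k)
  refine ⟨B + (1 + 4 * B) * B * E, by positivity, fun n k x hk => ⟨?_, fun l hl hn => ?_⟩⟩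
  · calc ‖F m q n x‖ ≤ B * MM m k := (norm_F_le hq hk n).trans (hsucc k)
      _ ≤ (B + (1 + 4 * B) * B * E) * MM m k := by
          gcongr
          exact le_add_of_nonneg_right (by positivity)
  · calc ‖F m q n x‖ ≤ (1 + 4 * m l) * MM m (k + 1) * (Q q (MM m l) / Q q n) :=
          norm_F_le_mul_Q_div_Q hq hanti hk hl hn
      _ ≤ (1 + 4 * B) * (B * MM m k) * (E * ((MM m l : ℝ) ^ α / (n : ℝ) ^ α)) := by
          gcongr
          · exact div_nonneg (Q_nonneg hq _) (Q_nonneg hq _)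
          · exact hB l
          · exact hsucc k
          · exact hratio _ _ (MM_pos l) hn
      _ = (1 + 4 * B) * B * E * (MM m l : ℝ) ^ α * MM m k / (n : ℝ) ^ α := by ring
      _ ≤ (B + (1 + 4 * B) * B * E) * (MM m l : ℝ) ^ α * MM m k / (n : ℝ) ^ α := by
          gcongr
          exact le_add_of_nonneg_left (by positivity)

end NorlundKernel

section Convolution

variable {m : ℕ → ℕ}

lemma measurable_psi (n : ℕ) : Measurable (psi m n) := by
  refine Finset.measurable_fun_prod _ fun k _ => Measurable.pow_const ?_ _
  exact (measurable_from_top (f := fun z : ZMod (m k) =>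
    Complex.exp (2 * Real.pi * Complex.I * (z.val : ℂ) / m k))).comp (measurable_pi_apply k)

variable [∀ n, NeZero (m n)] {μ : Measure (G m)} {a : G m → ℂ}

lemma integrable_mul_psi_sub (ha : Integrable a μ) (n : ℕ) (x : G m) :
    Integrable (fun t => a t * psi m n (x - t)) μ := by
  refine ha.mul_bdd (c := 1) ?_ (Eventually.of_forall fun t => (norm_psi n _).le)
  simp only [psi_sub]
  exact ((Complex.continuous_conj.measurable.comp
    (measurable_psi n)).const_mul _).aestronglyMeasurable

lemma integrable_mul_D_sub (ha : Integrable a μ) (n : ℕ) (x : G m) :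
    Integrable (fun t => a t * D m n (x - t)) μ := by
  simp only [D, mul_sum]
  exact integrable_finsetSum _ fun i _ => integrable_mul_psi_sub ha i x

lemma fS_eq_integral (ha : Integrable a μ) (n : ℕ) (x : G m) :
    fS m μ a n x = ∫ t, a t * D m n (x - t) ∂μ := by
  simp only [D, mul_sum]
  rw [integral_finsetSum _ fun i _ => integrable_mul_psi_sub ha i x, fS]
  refine sum_congr rfl fun i _ => ?_
  rw [fcoef, ← integral_mul_const]
  congr 1 with t
  rw [psi_sub]
  ring

lemma fT_eq_integral (ha : Integrable a μ) (q : ℕ → ℝ) (n : ℕ) (x : G m) :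
    fT m q μ a n x = ∫ t, a t * F m q n (x - t) ∂μ := by
  simp only [F, mul_sum, mul_left_comm (a _)]
  rw [integral_finsetSum _ fun k _ => ((integrable_mul_D_sub ha k x).const_mul _).const_mul _,
    fT, mul_sum]
  exact sum_congr rfl fun k _ => by
    rw [fS_eq_integral ha, integral_const_mul, integral_const_mul]

lemma norm_fT_le_mul_integral_norm (ha : Integrable a μ) {q : ℕ → ℝ} {n : ℕ} {x : G m} {C : ℝ}
    (hF : ∀ t ∈ Function.support a, ‖F m q n (x - t)‖ ≤ C) :
    ‖fT m q μ a n x‖ ≤ C * ∫ t, ‖a t‖ ∂μ := by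
  rw [fT_eq_integral ha, ← integral_const_mul]
  refine norm_integral_le_of_norm_le (ha.norm.const_mul C) (Eventually.of_forall fun t => ?_)
  by_cases ht : a t = 0
  · simp [ht]
  · rw [norm_mul, mul_comm]
    exact mul_le_mul_of_nonneg_right (hF t ht) (norm_nonneg _)

end Convolution

section Cylinders

variable {m : ℕ → ℕ}

lemma cyl_anti (x : G m) : Antitone fun n => cyl m n x :=
  fun _ _ h _ hy j hj => hy j (hj.trans_le h)

lemma sub_mem_cyl {n : ℕ} {x t y : G m} (hx : x ∈ cyl m n y) (ht : t ∈ cyl m n 0) :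
    x - t ∈ cyl m n y := fun j hj => by
  rw [Pi.sub_apply, hx j hj, ht j hj, Pi.zero_apply, sub_zero]

lemma natCast_zmod_ne_zero {M s : ℕ} (hs : 1 ≤ s) (hsM : s ≤ M - 1) : (s : ZMod M) ≠ 0 := by
  rw [Ne, ZMod.natCast_eq_zero_iff]
  exact Nat.not_dvd_of_pos_of_lt hs (by lia)

lemma isLeadingIndex_of_mem_cyl_oneSpike {k s : ℕ} (hs : 1 ≤ s) (hsm : s ≤ m k - 1) {x : G m}
    (hx : x ∈ cyl m (k + 1) (oneSpike m k s)) : IsLeadingIndex k x := by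
  refine ⟨fun j hj => ?_, ?_⟩
  · rw [hx j (by lia), oneSpike, if_neg hj.ne, Pi.zero_apply]
  · rw [hx k k.lt_succ_self, oneSpike, if_pos rfl]
    exact natCast_zmod_ne_zero hs hsm

lemma cyl_twoSpike_subset_cyl_oneSpike {k l : ℕ} (hkl : k < l) (sk sl : ℕ) :
    cyl m (l + 1) (twoSpike m k sk l sl) ⊆ cyl m (k + 1) (oneSpike m k sk) := fun x hx j hj => by
  rw [hx j (by lia), twoSpike, oneSpike, if_neg (show j ≠ l by lia)]

lemma isLeadingIndex_tail_of_mem_cyl_twoSpike {k l sk sl : ℕ} (hkl : k < l) (hs : 1 ≤ sl)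
    (hsm : sl ≤ m l - 1) {x : G m} (hx : x ∈ cyl m (l + 1) (twoSpike m k sk l sl)) :
    IsLeadingIndex l (tail (k + 1) x) := by
  refine ⟨fun j hj => ?_, ?_⟩
  · rw [tail, Pi.zero_apply, ite_eq_left_iff]
    intro hkj
    rw [hx j (by lia), twoSpike, if_neg (by lia), if_neg hj.ne]
  · rw [tail, if_neg (by lia), hx l l.lt_succ_self, twoSpike, if_neg hkl.ne', if_pos rfl]
    exact natCast_zmod_ne_zero hs hsm

end Cylinders

section Atoms

lemma integral_norm_le_of_support_subset {X E : Type*} [MeasurableSpace X] {μ : Measure X}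
    [NormedAddCommGroup E] {f : X → E} {s : Set X} {C : ℝ} (hs : μ s < ∞)
    (hsupp : Function.support f ⊆ s) (hC : ∀ᵐ x ∂μ, ‖f x‖ ≤ C) :
    ∫ x, ‖f x‖ ∂μ ≤ C * μ.real s := by
  have hzero (x : X) (hx : x ∉ s) : ‖f x‖ = 0 := by
    rw [norm_eq_zero]
    exact Function.notMem_support.mp fun h => hx (hsupp h)
  rw [← setIntegral_eq_integral_of_forall_compl_eq_zero hzero]
  refine (Real.le_norm_self _).trans (norm_setIntegral_le_of_norm_le_const_ae' hs ?_)
  filter_upwards [hC] with x hx _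
  rwa [norm_norm]

lemma ae_norm_le_of_eLpNorm_top_le {X E : Type*} [MeasurableSpace X] {μ : Measure X}
    [NormedAddCommGroup E] {f : X → E} {C : ℝ} (hC : 0 ≤ C)
    (hf : eLpNorm f ⊤ μ ≤ ENNReal.ofReal C) : ∀ᵐ x ∂μ, ‖f x‖ ≤ C := by
  rw [eLpNorm_exponent_top] at hf
  filter_upwards [ae_le_eLpNormEssSup (f := f) (μ := μ)] with x hx
  have := hx.trans hf
  rwa [← ofReal_norm, ENNReal.ofReal_le_ofReal_iff hC] at this

lemma integral_norm_le_of_atom {m : ℕ → ℕ} [∀ n, NeZero (m n)] {μ : Measure (G m)}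
    {a : G m → ℂ} {N : ℕ} {α : ℝ} (hμ : μ (cyl m N 0) = (MM m N : ℝ≥0∞)⁻¹)
    (hsupp : Function.support a ⊆ cyl m N 0)
    (ha : eLpNorm a ⊤ μ ≤ ENNReal.ofReal ((MM m N : ℝ) ^ (1 + α))) :
    ∫ t, ‖a t‖ ∂μ ≤ (MM m N : ℝ) ^ α := by
  have hM : (0 : ℝ) < MM m N := by exact_mod_cast MM_pos N
  have hfin : μ (cyl m N 0) < ∞ := by
    rw [hμ, ENNReal.inv_lt_top]
    exact_mod_cast MM_pos N
  refine (integral_norm_le_of_support_subset hfin hsupp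
    (ae_norm_le_of_eLpNorm_top_le (by positivity) ha)).trans_eq ?_
  rw [Measure.real, hμ, ENNReal.toReal_inv, ENNReal.toReal_natCast, Real.rpow_add hM,
    Real.rpow_one]
  field

end Atoms

theorem statement11_general
    (m : ℕ → ℕ) (hm : ∀ n, 2 ≤ m n) (hmb : ∃ B, ∀ n, m n ≤ B) (α : ℝ) (hα1 : α ≤ 1)
    (q : ℕ → ℝ) (hq0 : 0 < q 0) (hqnn : ∀ n, 0 ≤ q n) (hqmono : ∀ n, q (n + 1) ≤ q n)
    (hQ : (fun n : ℕ => (n : ℝ) ^ α / Q q n) =O[atTop] (fun _ => (1 : ℝ)))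
    (hq' : (fun n : ℕ => (q n - q (n + 1)) / (n : ℝ) ^ (α - 2)) =O[atTop] (fun _ => (1 : ℝ))) :
    ∃ c : ℝ, ∀ (μ : Measure (G m)) (N : ℕ) (a : G m → ℂ) (A : ℝ), Integrable a μ →
      Function.support a ⊆ cyl m N 0 → ∫ t, ‖a t‖ ∂μ ≤ A →
      ∀ n : ℕ,
        (∀ k l : ℕ, k < l → l < N → MM m l ≤ n → ∀ sk sl : ℕ,
            1 ≤ sk → sk ≤ m k - 1 → 1 ≤ sl → sl ≤ m l - 1 →
            ∀ x ∈ cyl m (l + 1) (twoSpike m k sk l sl),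
              ‖fT m q μ a n x‖ ≤ c * (MM m l : ℝ) ^ α * (MM m k : ℝ) * A / (n : ℝ) ^ α) ∧
          (∀ k : ℕ, k < N → ∀ sk : ℕ, 1 ≤ sk → sk ≤ m k - 1 →
            ∀ x ∈ cyl m (k + 1) (oneSpike m k sk),
              ‖fT m q μ a n x‖ ≤ c * (MM m k : ℝ) * A) := by
  have (n : ℕ) : (m n).AtLeastTwo := ⟨hm n⟩
  obtain ⟨c, hc, hF⟩ :=
    exists_norm_F_le hmb hα1 hq0 hqnn (antitone_nat_of_succ_le hqmono) hQ hq'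
  refine ⟨c, fun μ N a A ha hsupp hA n => ⟨?_, ?_⟩⟩
  · intro k l hkl hlN hln sk sl hsk hskm hsl hslm x hx
    have hkernel (t : G m) (ht : t ∈ Function.support a) :
        ‖F m q n (x - t)‖ ≤ c * (MM m l : ℝ) ^ α * MM m k / (n : ℝ) ^ α := by
      have hxt := sub_mem_cyl hx (cyl_anti 0 hlN (hsupp ht))
      exact (hF n k _ (isLeadingIndex_of_mem_cyl_oneSpike hsk hskm
        (cyl_twoSpike_subset_cyl_oneSpike hkl sk sl hxt))).2 l
        (isLeadingIndex_tail_of_mem_cyl_twoSpike hkl hsl hslm hxt) hln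
    rw [mul_div_right_comm]
    exact (norm_fT_le_mul_integral_norm ha hkernel).trans (by gcongr)
  · intro k hkN sk hsk hskm x hx
    have hkernel (t : G m) (ht : t ∈ Function.support a) :
        ‖F m q n (x - t)‖ ≤ c * MM m k :=
      (hF n k _ (isLeadingIndex_of_mem_cyl_oneSpike hsk hskm
        (sub_mem_cyl hx (cyl_anti 0 hkN (hsupp ht))))).1
    exact (norm_fT_le_mul_integral_norm ha hkernel).trans (by gcongr)

/-- Let `0 < α ≤ 1`, let `{q_n}` be a non-increasing sequence of
non-negative reals with `q_0 > 0` satisfying `n^α/Q_n = O(1)` and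
`(q_n - q_{n+1})/n^{α-2} = O(1)`, and let `a` be a `1/(1+α)`-atom with support `I_N`. Then
there is a constant `c_α` such that for every `n > M_N`:
(i) `|t_n a(x)| ≤ c_α M_l^α M_k M_N^α / n^α` for `x ∈ I_{l+1}(s_k e_k + s_l e_l)`,
`0 ≤ k < l < N`, `1 ≤ s_k ≤ m_k - 1`, `1 ≤ s_l ≤ m_l - 1`; and
(ii) `|t_n a(x)| ≤ c_α M_k M_N^α` for `x ∈ I_N(s_k e_k)`, `0 ≤ k < N`,
`1 ≤ s_k ≤ m_k - 1`. -/
theorem statement11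
    (m : ℕ → ℕ) (hm : ∀ n, 2 ≤ m n) (hmb : ∃ B, ∀ n, m n ≤ B)
    (μ : Measure (G m)) [IsProbabilityMeasure μ]
    (hμ : ∀ (n : ℕ) (x : G m), μ (cyl m n x) = ((MM m n : ℝ≥0∞))⁻¹)
    (α : ℝ) (hα0 : 0 < α) (hα1 : α ≤ 1)
    (q : ℕ → ℝ) (hq0 : 0 < q 0) (hqnn : ∀ n, 0 ≤ q n) (hqmono : ∀ n, q (n + 1) ≤ q n)
    (hQ : (fun n : ℕ => (n : ℝ) ^ α / Q q n) =O[atTop] (fun _ => (1 : ℝ)))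
    (hq' : (fun n : ℕ => (q n - q (n + 1)) / (n : ℝ) ^ (α - 2)) =O[atTop] (fun _ => (1 : ℝ))) :
    ∃ c : ℝ, ∀ N : ℕ, ∀ a : G m → ℂ, Measurable a →
      Function.support a ⊆ cyl m N 0 →
      (∫ x in cyl m N 0, a x ∂μ) = 0 →
      eLpNorm a ⊤ μ ≤ ENNReal.ofReal ((MM m N : ℝ) ^ (1 + α)) →
      ∀ n : ℕ, MM m N < n →
        ((∀ k l : ℕ, k < l → l < N → ∀ sk sl : ℕ,
            1 ≤ sk → sk ≤ m k - 1 → 1 ≤ sl → sl ≤ m l - 1 →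
            ∀ x ∈ cyl m (l + 1) (twoSpike m k sk l sl),
              ‖fT m q μ a n x‖ ≤
                c * (MM m l : ℝ) ^ α * (MM m k : ℝ) * (MM m N : ℝ) ^ α / (n : ℝ) ^ α) ∧
          (∀ k : ℕ, k < N → ∀ sk : ℕ, 1 ≤ sk → sk ≤ m k - 1 →
            ∀ x ∈ cyl m N (oneSpike m k sk),
              ‖fT m q μ a n x‖ ≤ c * (MM m k : ℝ) * (MM m N : ℝ) ^ α)) := by
  have (n : ℕ) : (m n).AtLeastTwo := ⟨hm n⟩
  obtain ⟨c, hc⟩ := statement11_general m hm hmb α hα1 q hq0 hqnn hqmono hQ hq'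
  refine ⟨c, fun N a ham hsupp _ hbound n hn => ?_⟩
  have ha : Integrable a μ := Integrable.of_bound ham.aestronglyMeasurable _
    (ae_norm_le_of_eLpNorm_top_le (by positivity) hbound)
  have ⟨htwo, hone⟩ :=
    hc μ N a _ ha hsupp (integral_norm_le_of_atom (hμ N 0) hsupp hbound) n
  exact ⟨fun k l hkl hlN => htwo k l hkl hlN ((MM_mono hlN.le).trans hn.le),
    fun k hkN sk hsk hskm x hx => hone k hkN sk hsk hskm x (cyl_anti _ hkN hx)⟩

end Vilenkin
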